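/- Let Π ⊆ ℝ^d be a closed convex set with 0 ∈ Π, δ ∈ (0,1), r ≥ 0, σ an invertible d×d real matrix, and let 𝔹 ⊆ ℝ^d be a nonempty convex compact set. Then for every z ∈ ℝ^d the function H(z; ·, ·) admits a saddle point on Π × 𝔹: there exist p* ∈ Π and b* ∈ 𝔹 such that H(z; p, b*) ≤ H(z; p*, b*) ≤ H(z; p*, b) for all p ∈ Π and b ∈ 𝔹. Moreover the saddle value satisfies H(z; p*, b*) ≥ δr ≥ 0. -/

import Mathlib

open Matrix

/-- Matrix–vector multiplication on Euclidean space. -/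
noncomputable def mvE {d : ℕ} (M : Matrix (Fin d) (Fin d) ℝ) (v : EuclideanSpace ℝ (Fin d)) :
    EuclideanSpace ℝ (Fin d) :=
  (WithLp.equiv 2 (Fin d → ℝ)).symm (M.mulVec (WithLp.equiv 2 (Fin d → ℝ) v))

/-- Euclidean dot product `xᵀ y`. -/
noncomputable def dotE {d : ℕ} (x y : EuclideanSpace ℝ (Fin d)) : ℝ := ∑ i, x i * y i

/-!
In `b` the function `H z p b` is affine. In `p` it is a bounded linear perturbation, uniformly in
`b ∈ 𝔹`, of `-½ δ (1 - δ) ‖σᵀ p‖²`, which is concave and, since `σᵀ` is injective, decays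
quadratically. So `p` may be confined to a ball, where Sion's minimax theorem applies. The saddle
value is at least `H z 0 b* = δ r`.
-/

section

open Bornology Filter

section Supercoercive

variable {F G : Type*} [SeminormedAddCommGroup F] [SeminormedAddCommGroup G]

/-- Supercoercivity: `g y / ‖y‖ → ∞` as `‖y‖ → ∞`, stated without division as eventual domination
of every multiple of the norm. It lets `g` absorb linear perturbations. -/
def IsSupercoercive (g : F → ℝ) : Prop :=
  ∀ C : ℝ, ∀ᶠ y in cobounded F, C * ‖y‖ ≤ g y

theorem isSupercoercive_mul_norm_sq {k : ℝ} (hk : 0 < k) :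
    IsSupercoercive fun y : F ↦ k * ‖y‖ ^ 2 := by
  intro C
  filter_upwards [eventually_cobounded_le_norm (C / k)] with y hy
  calc C * ‖y‖ ≤ k * ‖y‖ * ‖y‖ := by
        gcongr
        exact (div_le_iff₀' hk).mp hy
    _ = k * ‖y‖ ^ 2 := by ring

theorem IsSupercoercive.comp_of_antilipschitzWith {g : G → ℝ} (hg : IsSupercoercive g)
    {K : NNReal} {A : F → G} (hA : AntilipschitzWith K A) (hA0 : A 0 = 0) :
    IsSupercoercive fun y ↦ g (A y) := by
  intro C
  filter_upwards [hA.tendsto_cobounded.eventually (hg (|C| * K))] with y hy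
  calc C * ‖y‖ ≤ |C| * (K * ‖A y‖) := by
        gcongr
        exacts [le_abs_self C, hA.le_mul_norm hA0 y]
    _ = |C| * K * ‖A y‖ := by ring
    _ ≤ g (A y) := hy

theorem IsSupercoercive.sub_affine [NormedSpace ℝ F] {g : F → ℝ} (hg : IsSupercoercive g)
    (ℓ : F →L[ℝ] ℝ) (c : ℝ) : IsSupercoercive fun y ↦ g y - (ℓ y + c) := by
  intro C
  filter_upwards [hg (C + ‖ℓ‖ + 1), eventually_cobounded_le_norm c] with y hgy hcy
  have hℓy : ℓ y ≤ ‖ℓ‖ * ‖y‖ := (le_abs_self _).trans (ℓ.le_opNorm y)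
  linarith

end Supercoercive

theorem isSupercoercive_mul_norm_sq_sub_affine {F G : Type*} [NormedAddCommGroup F]
    [NormedSpace ℝ F] [FiniteDimensional ℝ F] [NormedAddCommGroup G] [NormedSpace ℝ G]
    {A : F →ₗ[ℝ] G} (hA : Function.Injective A) {k : ℝ} (hk : 0 < k) (ℓ : F →L[ℝ] ℝ) (c : ℝ) :
    IsSupercoercive fun y ↦ k * ‖A y‖ ^ 2 - (ℓ y + c) := by
  obtain ⟨K, -, hK⟩ := A.exists_antilipschitzWith (LinearMap.ker_eq_bot.mpr hA)
  exact ((isSupercoercive_mul_norm_sq hk).comp_of_antilipschitzWith hK A.map_zero).sub_affine ℓ c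

theorem convexOn_mul_norm_sq_sub_affine {F G : Type*} [AddCommGroup F] [Module ℝ F]
    [SeminormedAddCommGroup G] [NormedSpace ℝ G] (A : F →ₗ[ℝ] G) {k : ℝ} (hk : 0 ≤ k)
    (ℓ : F →ₗ[ℝ] ℝ) (c : ℝ) {Y : Set F} (hY : Convex ℝ Y) :
    ConvexOn ℝ Y fun y ↦ k * ‖A y‖ ^ 2 - (ℓ y + c) := by
  have hsq : ConvexOn ℝ Set.univ fun y ↦ ‖A y‖ ^ 2 :=
    (convexOn_univ_norm.comp_linearMap A).pow (fun _ _ ↦ norm_nonneg _) 2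
  exact ((hsq.subset (Set.subset_univ Y) hY).smul hk).sub ((ℓ.concaveOn hY).add_const c)

section SaddlePoint

variable {E F : Type*} [TopologicalSpace E] [AddCommGroup E] [Module ℝ E]
  [IsTopologicalAddGroup E] [ContinuousSMul ℝ E] [NormedAddCommGroup F] [NormedSpace ℝ F]
  {X : Set E} {Y : Set F}

/-- Sion's theorem with one non-compact side: outside a large ball `f x` stays below its value at
`y₀`, so a saddle point over the ball is one over all of `Y`. -/
theorem exists_isSaddlePointOn_of_eventually_cobounded_le [ProperSpace F] {f : E → F → ℝ}
    (hXne : X.Nonempty) (hXcomp : IsCompact X) (hYclosed : IsClosed Y)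
    (hlsc : ∀ y ∈ Y, LowerSemicontinuousOn (fun x ↦ f x y) X)
    (hconv : ∀ y ∈ Y, QuasiconvexOn ℝ X fun x ↦ f x y)
    (husc : ∀ x ∈ X, UpperSemicontinuousOn (f x) Y)
    (hconc : ∀ x ∈ X, QuasiconcaveOn ℝ Y (f x))
    {y₀ : F} (hy₀ : y₀ ∈ Y) (hfar : ∀ᶠ y in cobounded F, ∀ x ∈ X, f x y ≤ f x y₀) :
    ∃ a ∈ X, ∃ b ∈ Y, IsSaddlePointOn X Y f a b := by
  obtain ⟨R, hR, hR₀⟩ :=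
    ((Metric.hasAntitoneBasis_cobounded_compl_closedBall y₀).eventually_subset hfar |>.and
      (eventually_ge_atTop 0)).exists
  set K := Y ∩ Metric.closedBall y₀ R
  have hKY : K ⊆ Y := Set.inter_subset_left
  have hy₀K : y₀ ∈ K := ⟨hy₀, Metric.mem_closedBall_self hR₀⟩
  have hKcomp : IsCompact K := (isCompact_closedBall y₀ R).inter_left hYclosed
  have hXconv : Convex ℝ X := (hconv y₀ hy₀).convex
  have hKconv : Convex ℝ K := (hconc _ hXne.some_mem).convex.inter (convex_closedBall y₀ R)
  obtain ⟨a, ha, b, hb, hab⟩ := Sion.exists_isSaddlePointOn hXne hXconv hXcomp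
    (fun y hy ↦ hlsc y (hKY hy)) (fun y hy ↦ hconv y (hKY hy)) hKconv ⟨y₀, hy₀K⟩ hKcomp
    (fun x hx ↦ (husc x hx).mono hKY) (fun x hx ↦ hKconv.quasiconcaveOn_restrict (hconc x hx) hKY)
  refine ⟨a, ha, b, hKY hb, fun x hx y hy ↦ ?_⟩
  by_cases hyR : y ∈ Metric.closedBall y₀ R
  · exact hab x hx y ⟨hy, hyR⟩
  · exact (hR hyR a ha).trans (hab x hx y₀ hy₀K)

theorem exists_isSaddlePointOn_bilin_sub_of_isSupercoercive [ProperSpace F]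
    (L : E →L[ℝ] F →L[ℝ] ℝ) {g : F → ℝ}
    (hXne : X.Nonempty) (hXconv : Convex ℝ X) (hXcomp : IsCompact X)
    (hYne : Y.Nonempty) (hYclosed : IsClosed Y) (hglsc : LowerSemicontinuousOn g Y)
    (hgconv : ConvexOn ℝ Y g) (hg : IsSupercoercive g) :
    ∃ a ∈ X, ∃ b ∈ Y, IsSaddlePointOn X Y (fun x y ↦ L x y - g y) a b := by
  obtain ⟨y₀, hy₀⟩ := hYne
  obtain ⟨M, hM⟩ := hXcomp.exists_bound_of_continuousOn L.continuous.continuousOn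
  have abs_L_le : ∀ x ∈ X, ∀ y, |L x y| ≤ M * ‖y‖ := fun x hx y ↦ (L x).le_of_opNorm_le (hM x hx) y
  refine exists_isSaddlePointOn_of_eventually_cobounded_le hXne hXcomp hYclosed
    (fun y _ ↦ ?_) (fun y _ ↦ ?_) (fun x _ ↦ ?_) (fun x _ ↦ ?_) hy₀ ?_
  · exact Continuous.lowerSemicontinuous (by fun_prop) |>.lowerSemicontinuousOn X
  · exact (((ContinuousLinearMap.apply ℝ ℝ y).comp L).toLinearMap.convexOn hXconv |>.sub
      (concaveOn_const (g y) hXconv)).quasiconvexOn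
  · have hneg : UpperSemicontinuousOn (fun y ↦ -g y) Y :=
      continuous_neg.comp_lowerSemicontinuousOn_antitone hglsc fun _ _ ↦ neg_le_neg
    simpa only [sub_eq_add_neg] using
      ((L x).continuous.upperSemicontinuous.upperSemicontinuousOn Y).add hneg
  · exact (((L x).toLinearMap.concaveOn hgconv.1).sub hgconv).quasiconcaveOn
  · filter_upwards [hg (M + 1), eventually_cobounded_le_norm (M * ‖y₀‖ + g y₀)] with y hgy hy x hx
    have hLy := (le_abs_self _).trans (abs_L_le x hx y)
    have hLy₀ := (neg_le_abs _).trans (abs_L_le x hx y₀)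
    linarith

theorem exists_isSaddlePointOn_bilin_sub_mul_norm_sq [FiniteDimensional ℝ F] {G : Type*}
    [NormedAddCommGroup G] [NormedSpace ℝ G] (L : E →L[ℝ] F →L[ℝ] ℝ) {A : F →ₗ[ℝ] G}
    (hA : Function.Injective A) {k : ℝ} (hk : 0 < k) (ℓ : F →L[ℝ] ℝ) (c : ℝ)
    (hXne : X.Nonempty) (hXconv : Convex ℝ X) (hXcomp : IsCompact X)
    (hYne : Y.Nonempty) (hYconv : Convex ℝ Y) (hYclosed : IsClosed Y) :
    ∃ a ∈ X, ∃ b ∈ Y,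
      IsSaddlePointOn X Y (fun x y ↦ L x y - (k * ‖A y‖ ^ 2 - (ℓ y + c))) a b := by
  have := FiniteDimensional.proper_real F
  have hAcont : Continuous A := A.continuous_of_finiteDimensional
  have hcont : Continuous fun y ↦ k * ‖A y‖ ^ 2 - (ℓ y + c) := by fun_prop
  exact exists_isSaddlePointOn_bilin_sub_of_isSupercoercive L hXne hXconv hXcomp hYne hYclosed
    (hcont.lowerSemicontinuous.lowerSemicontinuousOn Y)
    (convexOn_mul_norm_sq_sub_affine A hk.le ℓ.toLinearMap c hYconv)
    (isSupercoercive_mul_norm_sq_sub_affine hA hk ℓ c)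

end SaddlePoint

theorem dotE_eq_inner {d : ℕ} (x y : EuclideanSpace ℝ (Fin d)) : dotE x y = inner ℝ x y := by
  simp [dotE, PiLp.inner_apply, mul_comm]

theorem dotE_mvE_mul_transpose_self {d : ℕ} (M : Matrix (Fin d) (Fin d) ℝ)
    (v : EuclideanSpace ℝ (Fin d)) : dotE v (mvE (M * Mᵀ) v) = ‖toEuclideanLin Mᵀ v‖ ^ 2 := by
  change v.ofLp ⬝ᵥ (M * Mᵀ) *ᵥ v.ofLp = _
  rw [EuclideanSpace.real_norm_sq_eq, ← mulVec_mulVec, dotProduct_mulVec, ← mulVec_transpose]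
  simp [dotProduct, toLpLin_apply, sq]

theorem toEuclideanLin_injective_of_isUnit_det {n 𝕜 : Type*} [Fintype n] [DecidableEq n] [RCLike 𝕜]
    {M : Matrix n n 𝕜} (hM : IsUnit M.det) : Function.Injective (toEuclideanLin M) :=
  (WithLp.toLp_injective 2).comp <|
    (mulVec_injective_of_isUnit ((isUnit_iff_isUnit_det M).mpr hM)).comp (WithLp.ofLp_injective 2)

end

/-- for every `z`, the function
`H(z; p, b) = (1/2)δ(δ−1) pᵀσσᵀp + δ pᵀ(b−r𝟙) + δ pᵀσz + δr`
admits a saddle point on `Π × 𝔹`, with saddle value `≥ δr ≥ 0`. -/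
theorem stmt_12 (d : ℕ) (δ r : ℝ) (hδ : δ ∈ Set.Ioo (0 : ℝ) 1) (hr : 0 ≤ r)
    (σ : Matrix (Fin d) (Fin d) ℝ) (hσ : IsUnit σ.det)
    (Pset : Set (EuclideanSpace ℝ (Fin d))) (hPclosed : IsClosed Pset)
    (hPconv : Convex ℝ Pset) (hP0 : (0 : EuclideanSpace ℝ (Fin d)) ∈ Pset)
    (Bset : Set (EuclideanSpace ℝ (Fin d))) (hBne : Bset.Nonempty)
    (hBconv : Convex ℝ Bset) (hBcomp : IsCompact Bset)
    (ones : EuclideanSpace ℝ (Fin d)) (hones : ∀ i, ones i = 1)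
    (H : EuclideanSpace ℝ (Fin d) → EuclideanSpace ℝ (Fin d) →
      EuclideanSpace ℝ (Fin d) → ℝ)
    (hH : ∀ z p b, H z p b = 1 / 2 * δ * (δ - 1) * dotE p (mvE (σ * σᵀ) p)
      + δ * dotE p (b - r • ones) + δ * dotE p (mvE σ z) + δ * r) :
    ∀ z : EuclideanSpace ℝ (Fin d), ∃ pstar ∈ Pset, ∃ bstar ∈ Bset,
      (∀ p ∈ Pset, ∀ b ∈ Bset,
        H z p bstar ≤ H z pstar bstar ∧ H z pstar bstar ≤ H z pstar b) ∧
      δ * r ≤ H z pstar bstar ∧ 0 ≤ δ * r := by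
  intro z
  obtain ⟨hδ0, hδ1⟩ := hδ
  set w := mvE σ z - r • ones with hw
  have hHz : ∀ p b, H z p b = (δ • innerSL ℝ) b p - (1 / 2 * δ * (1 - δ) *
      ‖toEuclideanLin σᵀ p‖ ^ 2 - ((δ • innerSL ℝ w) p + δ * r)) := fun p b ↦ by
    rw [hH, dotE_mvE_mul_transpose_self]
    simp only [dotE_eq_inner, hw, _root_.smul_apply, innerSL_apply_apply, smul_eq_mul,
      inner_sub_right, real_inner_comm p]
    ring
  have hσT : Function.Injective (toEuclideanLin σᵀ) :=
    toEuclideanLin_injective_of_isUnit_det (by rwa [det_transpose])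
  have hk : 0 < 1 / 2 * δ * (1 - δ) := mul_pos (by positivity) (sub_pos.mpr hδ1)
  obtain ⟨b, hb, p, hp, hsaddle⟩ := exists_isSaddlePointOn_bilin_sub_mul_norm_sq (δ • innerSL ℝ)
    hσT hk (δ • innerSL ℝ w) (δ * r) hBne hBconv hBcomp ⟨0, hP0⟩ hPconv hPclosed
  simp only [IsSaddlePointOn, ← hHz] at hsaddle
  have hH0 : H z 0 b = δ * r := by simp [hHz]
  exact ⟨p, hp, b, hb, fun q hq a ha ↦ ⟨hsaddle b hb q hq, hsaddle a ha p hp⟩,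
    hH0 ▸ hsaddle b hb 0 hP0, mul_nonneg hδ0.le hr⟩
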